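/- Let λ_1 > λ_2 > … > 0 be a strictly decreasing positive sequence satisfying the spacing condition. Then there is a finite constant C such that for every κ_0 ≥ 1 and every fixed k with 1 ≤ k ≤ κ_0, Σ_{r=1, r ≠ k}^{κ_0} λ_r (λ_k − λ_r)^{-2} ≤ C λ_{κ_0}^{-2} κ_0^2 Σ_{r=1}^{κ_0} λ_r. -/

import Mathlib

open Filter

/-- inequality (A.10) of the paper.
If `λ_1 > λ_2 > … > 0` satisfies the eigenvalue spacing condition, then there
is a finite constant `C` such that for every `κ₀ ≥ 1` and every `k` with
`1 ≤ k ≤ κ₀`, `∑_{r=1, r≠k}^{κ₀} λ_r (λ_k − λ_r)^{-2}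
  ≤ C λ_{κ₀}^{-2} κ₀² ∑_{r=1}^{κ₀} λ_r`. -/
theorem quadratic_inference_truncated_spacing_sum_bound
    (lam : ℕ → ℝ) (C₀ : ℝ) (hC₀ : 0 < C₀)
    (hpos : ∀ r : ℕ, 1 ≤ r → 0 < lam r)
    (hanti : ∀ r s : ℕ, 1 ≤ r → r < s → lam s < lam r)
    (hspacing : ∀ k r : ℕ, 1 ≤ k → 1 ≤ r → k ≠ r →
      max (lam k) (lam r) / |lam k - lam r|
        ≤ C₀ * (max k r : ℝ) / |(k : ℝ) - (r : ℝ)|) :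
    ∃ C : ℝ, ∀ κ₀ k : ℕ, 1 ≤ k → k ≤ κ₀ →
      ∑ r ∈ (Finset.Icc 1 κ₀).erase k, lam r / (lam k - lam r) ^ 2
        ≤ C * ((lam κ₀)⁻¹) ^ 2 * (κ₀ : ℝ) ^ 2 * ∑ r ∈ Finset.Icc 1 κ₀, lam r := by
  refine ⟨C₀ ^ 2, fun κ k hk hkκ => ?_⟩
  have hκ1 : 1 ≤ κ := hk.trans hkκ
  have hκ := hpos κ hκ1
  have hmono : ∀ r : ℕ, 1 ≤ r → r ≤ κ → lam κ ≤ lam r := by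
    intro r h1 h2
    rcases h2.eq_or_lt with h | h
    · rw [h]
    · exact (hanti r κ h1 h).le
  rw [Finset.mul_sum]
  refine le_trans (Finset.sum_le_sum (g := fun r => C₀ ^ 2 * ((lam κ)⁻¹) ^ 2 * (κ : ℝ) ^ 2 * lam r) ?_)
    (Finset.sum_le_sum_of_subset_of_nonneg (Finset.erase_subset _ _) ?_)
  · intro r hr
    simp only [Finset.mem_erase, Finset.mem_Icc] at hr
    obtain ⟨hrk, hr1, hrκ⟩ := hr
    have hlr := hpos r hr1
    have hd : 0 < |lam k - lam r| := by
      rw [abs_pos, sub_ne_zero]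
      rcases lt_or_gt_of_ne hrk with h | h
      · exact (hanti r k hr1 h).ne
      · exact (hanti k r hk h).ne'
    have hkr : (1 : ℝ) ≤ |(k : ℝ) - (r : ℝ)| := by
      have h : (1 : ℤ) ≤ |(k : ℤ) - r| := Int.one_le_abs (by omega)
      exact_mod_cast h
    have h1 := hspacing k r hk hr1 (Ne.symm hrk)
    have hmax : max (k : ℝ) (r : ℝ) ≤ κ :=
      max_le (by exact_mod_cast hkκ) (by exact_mod_cast hrκ)
    have hm0 : 0 ≤ max (k : ℝ) (r : ℝ) := le_max_of_le_left (Nat.cast_nonneg _)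
    have h2 : C₀ * max (k : ℝ) (r : ℝ) / |(k : ℝ) - (r : ℝ)| ≤ C₀ * κ :=
      (div_le_self (by positivity) hkr).trans (by gcongr)
    have h3 : lam κ / |lam k - lam r| ≤ C₀ * κ := by
      refine le_trans ?_ (h1.trans h2)
      gcongr
      exact le_max_of_le_right (hmono r hr1 hrκ)
    have h4 : |lam k - lam r|⁻¹ ≤ C₀ * κ * (lam κ)⁻¹ := by
      rw [← div_eq_mul_inv, le_div_iff₀ hκ]
      calc _ = lam κ / |lam k - lam r| := by rw [div_eq_mul_inv, mul_comm]
        _ ≤ _ := h3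
    have h5 := pow_le_pow_left₀ (inv_nonneg.2 hd.le) h4 2
    rw [inv_pow, sq_abs] at h5
    calc lam r / (lam k - lam r) ^ 2 = ((lam k - lam r) ^ 2)⁻¹ * lam r := by
          rw [div_eq_mul_inv, mul_comm]
      _ ≤ (C₀ * κ * (lam κ)⁻¹) ^ 2 * lam r := by gcongr
      _ = _ := by ring
  · intro r hr _
    have := hpos r (Finset.mem_Icc.1 hr).1
    positivity
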